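/- Let γ satisfy g = γ*h, and let γ_ε be any function satisfying g_ε = γ_ε*h. Then ‖γ − γ_ε‖²_{L²(ρ)} ≤ (1/m_ω^h) ‖g − g_ε‖²_{H¹_α(ρ)}, where ‖f‖²_{H¹_α(ρ)} = ∫₀^∞ (α₁|f|² + α₂|f'|²) e^{-2ωt} dt. -/

import Mathlib

/-!
On the line `Re z = ω` the Laplace transform is the Fourier transform of the damped function
`e^{-ωt} f(t)`, so Plancherel turns `‖f‖²_{L²(ρ)}` into an `L²` norm of `f̂`. For `d = γ - γ_ε` and
`k = g - g_ε = d * h` the convolution theorem gives `k̂ = ĥ d̂`, and `k(0) = 0` gives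
`(k')^(z) = z k̂(z)`. Hence the `H¹_α(ρ)` norm of `k` is the `L²` norm of `d̂` weighted by
`α₁|ĥ(z)|² + α₂|z ĥ(z)|²`, which is at least `m_ω^h` everywhere on the line.
-/

open MeasureTheory Complex Real

/-- Laplace transform of a real function on `[0,∞)`. -/
noncomputable def laplace (f : ℝ → ℝ) (z : ℂ) : ℂ :=
  ∫ t in Set.Ioi (0 : ℝ), (f t : ℂ) * Complex.exp (-z * t)

/-- Causal convolution on `[0,∞)`. -/
noncomputable def conv (f h : ℝ → ℝ) (t : ℝ) : ℝ :=
  ∫ s in (0 : ℝ)..t, f (t - s) * h s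

/-- Combined spectral weight `α₁|ĥ(z)|² + α₂|zĥ(z)|²` along the line `Re z = ω`. -/
noncomputable def specWeight (h : ℝ → ℝ) (α₁ α₂ ω τ : ℝ) : ℝ :=
  α₁ * ‖laplace h ((ω : ℂ) + τ * Complex.I)‖ ^ 2 +
    α₂ * ‖((ω : ℂ) + τ * Complex.I) * laplace h ((ω : ℂ) + τ * Complex.I)‖ ^ 2

open Set Filter
open scoped Topology FourierTransform SchwartzMap

section Plancherel

lemma norm_toLp_two_sq {X E : Type*} [MeasurableSpace X] {μ : Measure X} [NormedAddCommGroup E]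
    {f : X → E} (hf : MemLp f 2 μ) : ‖hf.toLp f‖ ^ 2 = ∫ x, ‖f x‖ ^ 2 ∂μ := by
  have h_nonneg : 0 ≤ ∫ x, ‖f x‖ ^ 2 ∂μ := integral_nonneg fun x => sq_nonneg _
  rw [Lp.norm_toLp, hf.eLpNorm_eq_integral_rpow_norm two_ne_zero ENNReal.ofNat_ne_top,
    ENNReal.toReal_ofReal (by positivity)]
  simpa using Real.rpow_inv_natCast_pow h_nonneg two_ne_zero

variable {V : Type*} [NormedAddCommGroup V] [InnerProductSpace ℝ V] [FiniteDimensional ℝ V]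
  [MeasurableSpace V] [BorelSpace V]

lemma integral_fourier_smul_eq_of_integrable {E : Type*} [NormedAddCommGroup E] [NormedSpace ℂ E]
    [CompleteSpace E] {φ : V → ℂ} {f : V → E} (hφ : Integrable φ) (hf : Integrable f) :
    ∫ ξ, 𝓕 φ ξ • f ξ = ∫ x, φ x • 𝓕 f x := by
  simpa using! VectorFourier.integral_fourierIntegral_smul_eq_flip (L := innerₗ V)
    Real.continuous_fourierChar continuous_inner hφ hf

variable {F : Type*} [NormedAddCommGroup F] [InnerProductSpace ℂ F] [CompleteSpace F] {f : V → F}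

lemma coeFn_fourier_toLp_two (hf : Integrable f) (hf2 : MemLp f 2) :
    (𝓕 (hf2.toLp f) : Lp F 2 (volume : Measure V)) =ᵐ[volume] 𝓕 f := by
  have hcont : Continuous (𝓕 f) :=
    VectorFourier.fourierIntegral_continuous Real.continuous_fourierChar continuous_inner hf
  refine ae_eq_of_integral_contDiff_smul_eq ((Lp.memLp _).locallyIntegrable one_le_two)
    hcont.locallyIntegrable fun φ hφ hφ_supp => ?_
  have hψ_supp : HasCompactSupport (Complex.ofRealCLM ∘ φ) := hφ_supp.comp_left rfl
  let ψ : 𝓢(V, ℂ) := hψ_supp.toSchwartzMap (by fun_prop)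
  have hψ (u : V → F) : ∫ x, φ x • u x = ∫ x, ψ x • u x :=
    integral_congr_ae (.of_forall fun x => by simp [ψ])
  calc ∫ x, φ x • (𝓕 (hf2.toLp f) : Lp F 2 (volume : Measure V)) x
      = ∫ x, ψ x • (𝓕 (hf2.toLp f) : Lp F 2 (volume : Measure V)) x := hψ _
    _ = ∫ x, (𝓕 ψ) x • hf2.toLp f x := by
        simpa using! (DFunLike.congr_fun
          (Lp.fourier_toTemperedDistribution_eq (hf2.toLp f)) ψ).symm
    _ = ∫ x, (𝓕 ψ) x • f x :=
        integral_congr_ae (hf2.coeFn_toLp.mono fun x hx => congrArg ((𝓕 ψ) x • ·) hx)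
    _ = ∫ x, ψ x • 𝓕 f x := integral_fourier_smul_eq_of_integrable ψ.integrable hf
    _ = ∫ x, φ x • 𝓕 f x := (hψ _).symm

lemma memLp_two_fourier (hf : Integrable f) (hf2 : MemLp f 2) : MemLp (𝓕 f) 2 :=
  (memLp_congr_ae (coeFn_fourier_toLp_two hf hf2)).1 (Lp.memLp _)

lemma integral_norm_sq_fourier_of_integrable (hf : Integrable f) (hf2 : MemLp f 2) :
    ∫ ξ, ‖𝓕 f ξ‖ ^ 2 = ∫ x, ‖f x‖ ^ 2 := by
  have hF : (memLp_two_fourier hf hf2).toLp (𝓕 f) = 𝓕 (hf2.toLp f) :=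
    Lp.ext ((MemLp.coeFn_toLp _).trans (coeFn_fourier_toLp_two hf hf2).symm)
  rw [← norm_toLp_two_sq (memLp_two_fourier hf hf2), hF, Lp.norm_fourier_eq, norm_toLp_two_sq]

end Plancherel

section LeibnizRule

variable {E : Type*} [NormedAddCommGroup E] [NormedSpace ℝ E] {f f' : ℝ → ℝ → E}

lemma hasDerivAt_intervalIntegral_of_continuous (hf : Continuous f.uncurry)
    (hf' : Continuous f'.uncurry) (hderiv : ∀ t s, HasDerivAt (f · s) (f' t s) t) (a b t : ℝ) :
    HasDerivAt (fun t => ∫ s in a..b, f t s) (∫ s in a..b, f' t s) t := by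
  obtain ⟨B, hB⟩ := ((isCompact_closedBall t 1).prod
    (isCompact_uIcc (a := a) (b := b))).exists_bound_of_continuousOn hf'.continuousOn
  refine (intervalIntegral.hasDerivAt_integral_of_dominated_loc_of_deriv_le (bound := fun _ => B)
    (Metric.closedBall_mem_nhds t one_pos) (.of_forall fun x => ?_) ?_ ?_
    (.of_forall fun s hs x hx => hB (x, s) ⟨hx, uIoc_subset_uIcc hs⟩) intervalIntegrable_const
    (.of_forall fun s _ x _ => hderiv x s)).2
  · exact (hf.uncurry_left x).aestronglyMeasurable
  · exact (hf.uncurry_left t).intervalIntegrable _ _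
  · exact (hf'.uncurry_left t).aestronglyMeasurable

lemma hasDerivAt_integral_diagonal [CompleteSpace E] (hf : Continuous f.uncurry)
    (hf' : Continuous f'.uncurry) (hderiv : ∀ t s, HasDerivAt (f · s) (f' t s) t) (a t : ℝ) :
    HasDerivAt (fun t => ∫ s in a..t, f t s) (f t t + ∫ s in a..t, f' t s) t := by
  have hpartial := hasStrictFDerivAt_uncurry_coprod (𝕜 := ℝ) (u := (t, t))
    (f := fun t b => ∫ s in a..b, f t s)
    (f₁ := fun t b => ContinuousLinearMap.toSpanSingleton ℝ (∫ s in a..b, f' t s))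
    (f₂ := fun t b => ContinuousLinearMap.toSpanSingleton ℝ (f t b))
    (.of_forall fun p =>
      (hasDerivAt_intervalIntegral_of_continuous hf hf' hderiv a p.2 p.1).hasFDerivAt)
    (.of_forall fun p =>
      ((hf.uncurry_left p.1).integral_hasStrictDerivAt a p.2).hasDerivAt.hasFDerivAt)
    ((ContinuousLinearMap.toSpanSingletonCLE (𝕜 := ℝ) (E := E)).continuous.comp
      (by fun_prop : Continuous fun p : ℝ × ℝ => ∫ s in a..p.2, f' p.1 s)).continuousAt
    ((ContinuousLinearMap.toSpanSingletonCLE (𝕜 := ℝ) (E := E)).continuous.comp hf).continuousAt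
  have hdiag : HasDerivAt (fun t : ℝ => (t, t)) (1, 1) t :=
    (hasDerivAt_id t).prodMk (hasDerivAt_id t)
  refine (HasFDerivAt.comp_hasDerivAt (f := fun t : ℝ => (t, t)) t
    hpartial.hasFDerivAt hdiag).congr_deriv ?_
  simp [Function.HasUncurry.uncurry, add_comm]

end LeibnizRule

section Convolution

variable {f g h : ℝ → ℝ}

lemma conv_comm (f g : ℝ → ℝ) : conv f g = conv g f := by
  ext t
  simpa [conv, mul_comm] using
    intervalIntegral.integral_comp_sub_left (a := 0) (b := t) (fun s => f s * g (t - s)) t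

lemma conv_zero_right (f g : ℝ → ℝ) : conv f g 0 = 0 := by simp [conv]

lemma conv_sub_left (hf : Continuous f) (hg : Continuous g) (hh : Continuous h) :
    conv (f - g) h = conv f h - conv g h := by
  ext t
  simp only [conv, Pi.sub_apply, sub_mul]
  exact intervalIntegral.integral_sub (Continuous.intervalIntegrable (by fun_prop) _ _)
    (Continuous.intervalIntegrable (by fun_prop) _ _)

lemma continuous_conv (hf : Continuous f) (hg : Continuous g) : Continuous (conv f g) := by
  unfold conv
  fun_prop

lemma hasDerivAt_conv (hf : Continuous f) (hh : ContDiff ℝ 1 h) (t : ℝ) :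
    HasDerivAt (conv f h) (h 0 * f t + conv f (deriv h) t) t := by
  have := hh.continuous_deriv_one
  have h_leibniz := hasDerivAt_integral_diagonal
    (f := fun t s => h (t - s) * f s) (f' := fun t s => deriv h (t - s) * f s)
    (by fun_prop) (by fun_prop) (fun t s =>
      ((hh.differentiable one_ne_zero (t - s)).hasDerivAt.comp_sub_const t s).mul_const _) 0 t
  rw [sub_self] at h_leibniz
  rwa [conv_comm f h, conv_comm f (deriv h)]

lemma deriv_conv (hf : Continuous f) (hh : ContDiff ℝ 1 h) :
    deriv (conv f h) = h 0 • f + conv f (deriv h) :=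
  funext fun t => (hasDerivAt_conv hf hh t).deriv

lemma contDiff_one_conv (hf : Continuous f) (hh : ContDiff ℝ 1 h) : ContDiff ℝ 1 (conv f h) := by
  refine contDiff_one_iff_deriv.2 ⟨fun t => (hasDerivAt_conv hf hh t).differentiableAt, ?_⟩
  rw [deriv_conv hf hh]
  exact (hf.const_smul _).add (continuous_conv hf hh.continuous_deriv_one)

end Convolution

/-- `f` has exponential order strictly below `ω` on `[0, ∞)`. The strict inequality makes the class
stable under convolution and puts the line `Re z = ω` in the region of absolute convergence of the
Laplace transform. -/
def HasExpOrderLT (f : ℝ → ℝ) (ω : ℝ) : Prop :=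
  ∃ σ < ω, ∃ M, ∀ t, 0 ≤ t → |f t| ≤ M * Real.exp (σ * t)

/-- The function `e^{-ωt} f(t)` on `(0, ∞)`, extended by zero, whose Fourier transform is the
Laplace transform of `f` along the line `Re z = ω`. -/
noncomputable def dampedExtension (f : ℝ → ℝ) (ω : ℝ) : ℝ → ℂ :=
  (Ioi 0).indicator fun t => (f t : ℂ) * Complex.exp (-(ω : ℂ) * t)

namespace HasExpOrderLT

variable {f g : ℝ → ℝ} {ω : ℝ} {z : ℂ}

lemma exists_common (hf : HasExpOrderLT f ω) (hg : HasExpOrderLT g ω) :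
    ∃ σ < ω, ∃ A B, ∀ t, 0 ≤ t →
      |f t| ≤ A * Real.exp (σ * t) ∧ |g t| ≤ B * Real.exp (σ * t) := by
  obtain ⟨σ₁, hσ₁, A, hA⟩ := hf
  obtain ⟨σ₂, hσ₂, B, hB⟩ := hg
  have hA0 : 0 ≤ A := by simpa using (abs_nonneg _).trans (hA 0 le_rfl)
  have hB0 : 0 ≤ B := by simpa using (abs_nonneg _).trans (hB 0 le_rfl)
  refine ⟨max σ₁ σ₂, max_lt hσ₁ hσ₂, A, B, fun t ht => ⟨(hA t ht).trans ?_, (hB t ht).trans ?_⟩⟩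
  · gcongr
    exact le_max_left _ _
  · gcongr
    exact le_max_right _ _

protected lemma add (hf : HasExpOrderLT f ω) (hg : HasExpOrderLT g ω) :
    HasExpOrderLT (f + g) ω := by
  obtain ⟨σ, hσ, A, B, hAB⟩ := hf.exists_common hg
  refine ⟨σ, hσ, A + B, fun t ht => ?_⟩
  rw [add_mul]
  exact (abs_add_le _ _).trans (add_le_add (hAB t ht).1 (hAB t ht).2)

protected lemma const_smul (hf : HasExpOrderLT f ω) (c : ℝ) : HasExpOrderLT (c • f) ω := by
  obtain ⟨σ, hσ, M, hM⟩ := hf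
  refine ⟨σ, hσ, |c| * M, fun t ht => ?_⟩
  rw [Pi.smul_apply, smul_eq_mul, abs_mul, mul_assoc]
  exact mul_le_mul_of_nonneg_left (hM t ht) (abs_nonneg c)

protected lemma sub (hf : HasExpOrderLT f ω) (hg : HasExpOrderLT g ω) :
    HasExpOrderLT (f - g) ω := by
  simpa [sub_eq_add_neg] using hf.add (hg.const_smul (-1))

protected lemma conv (hf : HasExpOrderLT f ω) (hg : HasExpOrderLT g ω) :
    HasExpOrderLT (conv f g) ω := by
  obtain ⟨σ, hσ, A, B, hAB⟩ := hf.exists_common hg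
  have hA0 : 0 ≤ A := by simpa using (abs_nonneg _).trans (hAB 0 le_rfl).1
  have hB0 : 0 ≤ B := by simpa using (abs_nonneg _).trans (hAB 0 le_rfl).2
  obtain ⟨σ', hσσ', hσ'ω⟩ := exists_between hσ
  have hδ : 0 < σ' - σ := sub_pos.2 hσσ'
  refine ⟨σ', hσ'ω, A * B / (σ' - σ), fun t ht => ?_⟩
  have h_integrand : ∀ s ∈ uIoc 0 t, ‖f (t - s) * g s‖ ≤ A * B * Real.exp (σ * t) := by
    intro s hs
    rw [uIoc_of_le ht] at hs
    calc ‖f (t - s) * g s‖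
        ≤ (A * Real.exp (σ * (t - s))) * (B * Real.exp (σ * s)) := by
          rw [norm_mul]
          exact mul_le_mul (hAB _ (sub_nonneg.2 hs.2)).1 (hAB _ hs.1.le).2 (norm_nonneg _)
            (by positivity)
      _ = A * B * Real.exp (σ * t) := by
          rw [mul_mul_mul_comm, ← Real.exp_add]
          ring_nf
  -- Raising the exponent from `σ` to `σ'` absorbs the length `t` of the interval.
  have h_linear : t ≤ Real.exp ((σ' - σ) * t) / (σ' - σ) := by
    rw [le_div_iff₀ hδ]
    linarith [Real.add_one_le_exp ((σ' - σ) * t)]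
  calc |conv f g t|
      ≤ A * B * Real.exp (σ * t) * t := by
        simpa [conv, abs_of_nonneg ht] using
          intervalIntegral.norm_integral_le_of_norm_le_const h_integrand
    _ ≤ A * B * Real.exp (σ * t) * (Real.exp ((σ' - σ) * t) / (σ' - σ)) := by gcongr
    _ = A * B / (σ' - σ) * (Real.exp (σ * t) * Real.exp ((σ' - σ) * t)) := by ring
    _ = A * B / (σ' - σ) * Real.exp (σ' * t) := by
        rw [← Real.exp_add]
        ring_nf

protected lemma deriv_conv (hf : Continuous f) (hg : ContDiff ℝ 1 g) (hf_exp : HasExpOrderLT f ω)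
    (hg'_exp : HasExpOrderLT (deriv g) ω) : HasExpOrderLT (deriv (conv f g)) ω := by
  rw [deriv_conv hf hg]
  exact (hf_exp.const_smul _).add (hf_exp.conv hg'_exp)

lemma exists_norm_mul_cexp_le (hf : HasExpOrderLT f z.re) :
    ∃ c > 0, ∃ M, ∀ t, 0 ≤ t → ‖(f t : ℂ) * Complex.exp (-z * t)‖ ≤ M * Real.exp (-c * t) := by
  obtain ⟨σ, hσ, M, hM⟩ := hf
  refine ⟨z.re - σ, sub_pos.2 hσ, M, fun t ht => ?_⟩
  calc ‖(f t : ℂ) * Complex.exp (-z * t)‖ = |f t| * Real.exp (-z.re * t) := by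
        simp [Complex.norm_exp]
    _ ≤ M * Real.exp (σ * t) * Real.exp (-z.re * t) := by
        gcongr
        exact hM t ht
    _ = M * Real.exp (-(z.re - σ) * t) := by
        rw [mul_assoc, ← Real.exp_add]
        ring_nf

lemma integrableOn_mul_cexp (hf : HasExpOrderLT f z.re) (hfc : Continuous f) :
    IntegrableOn (fun t : ℝ => (f t : ℂ) * Complex.exp (-z * t)) (Ioi 0) := by
  obtain ⟨c, hc, M, hM⟩ := hf.exists_norm_mul_cexp_le
  refine Integrable.mono' ((exp_neg_integrableOn_Ioi 0 hc).const_mul M)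
    (Continuous.aestronglyMeasurable (by fun_prop)) ?_
  exact (ae_restrict_mem measurableSet_Ioi).mono fun t ht => hM t (le_of_lt ht)

lemma tendsto_mul_cexp (hf : HasExpOrderLT f z.re) :
    Tendsto (fun t : ℝ => (f t : ℂ) * Complex.exp (-z * t)) atTop (𝓝 0) := by
  obtain ⟨c, hc, M, hM⟩ := hf.exists_norm_mul_cexp_le
  have h_exp : Tendsto (fun t : ℝ => M * Real.exp (-c * t)) atTop (𝓝 0) := by
    simpa using (Real.tendsto_exp_atBot.comp
      (tendsto_id.const_mul_atTop_of_neg (neg_lt_zero.2 hc))).const_mul M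
  exact squeeze_zero_norm' ((eventually_ge_atTop 0).mono hM) h_exp

lemma integrable_dampedExtension (hf : HasExpOrderLT f ω) (hfc : Continuous f) :
    Integrable (dampedExtension f ω) :=
  (integrable_indicator_iff measurableSet_Ioi).2
    (integrableOn_mul_cexp (z := ω) (by simpa using hf) hfc)

lemma memLp_two_dampedExtension (hf : HasExpOrderLT f ω) (hfc : Continuous f) :
    MemLp (dampedExtension f ω) 2 := by
  obtain ⟨c, hc, M, hM⟩ := exists_norm_mul_cexp_le (z := ω) (by simpa using hf)
  rw [dampedExtension, memLp_indicator_iff_restrict measurableSet_Ioi,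
    memLp_two_iff_integrable_sq_norm (Continuous.aestronglyMeasurable (by fun_prop))]
  refine Integrable.mono'
    ((exp_neg_integrableOn_Ioi 0 (b := 2 * c) (by positivity)).const_mul (M ^ 2))
    (Continuous.aestronglyMeasurable (by fun_prop)) ?_
  filter_upwards [ae_restrict_mem measurableSet_Ioi] with t ht
  calc ‖‖(f t : ℂ) * Complex.exp (-(ω : ℂ) * t)‖ ^ 2‖
      = ‖(f t : ℂ) * Complex.exp (-(ω : ℂ) * t)‖ ^ 2 := Real.norm_of_nonneg (sq_nonneg _)
    _ ≤ (M * Real.exp (-c * t)) ^ 2 := by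
        gcongr
        exact hM t (le_of_lt ht)
    _ = M ^ 2 * Real.exp (-(2 * c) * t) := by
        rw [mul_pow, ← Real.exp_nat_mul]
        ring_nf

end HasExpOrderLT

section Laplace

variable {f h : ℝ → ℝ} {ω : ℝ} {z : ℂ}

lemma norm_dampedExtension_sq (f : ℝ → ℝ) (ω t : ℝ) :
    ‖dampedExtension f ω t‖ ^ 2
      = (Ioi 0).indicator (fun t => f t ^ 2 * Real.exp (-2 * ω * t)) t := by
  by_cases ht : t ∈ Ioi 0
  · simp [dampedExtension, ht, Complex.norm_exp, mul_pow, ← Real.exp_nat_mul, mul_assoc]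
  · simp [dampedExtension, ht]

lemma integrableOn_sq_mul_exp (hf : HasExpOrderLT f ω) (hfc : Continuous f) :
    IntegrableOn (fun t => f t ^ 2 * Real.exp (-2 * ω * t)) (Ioi 0) := by
  have hF := hf.memLp_two_dampedExtension hfc
  rw [← integrable_indicator_iff measurableSet_Ioi]
  simpa only [norm_dampedExtension_sq] using (memLp_two_iff_integrable_sq_norm hF.1).1 hF

lemma fourier_dampedExtension (f : ℝ → ℝ) (ω ξ : ℝ) :
    𝓕 (dampedExtension f ω) ξ = laplace f (ω + (2 * π * ξ : ℝ) * Complex.I) := by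
  rw [Real.fourier_real_eq_integral_exp_smul, laplace, ← integral_indicator measurableSet_Ioi]
  congr 1 with t
  by_cases ht : t ∈ Ioi 0
  · simp only [dampedExtension, indicator_of_mem ht, smul_eq_mul]
    rw [mul_left_comm, ← Complex.exp_add]
    push_cast
    ring_nf
  · simp [dampedExtension, ht]

lemma laplace_eq_fourier_dampedExtension (f : ℝ → ℝ) (ω τ : ℝ) :
    laplace f (ω + τ * Complex.I) = 𝓕 (dampedExtension f ω) ((2 * π)⁻¹ * τ) := by
  rw [fourier_dampedExtension, mul_inv_cancel_left₀ two_pi_pos.ne']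

lemma integrable_norm_laplace_sq (hf : HasExpOrderLT f ω) (hfc : Continuous f) :
    Integrable fun τ : ℝ => ‖laplace f (ω + τ * Complex.I)‖ ^ 2 := by
  have hF := memLp_two_fourier (hf.integrable_dampedExtension hfc)
    (hf.memLp_two_dampedExtension hfc)
  simp only [laplace_eq_fourier_dampedExtension]
  exact ((memLp_two_iff_integrable_sq_norm hF.1).1 hF).comp_mul_left' (inv_pos.2 two_pi_pos).ne'

lemma integral_norm_laplace_sq (hf : HasExpOrderLT f ω) (hfc : Continuous f) :
    ∫ τ : ℝ, ‖laplace f (ω + τ * Complex.I)‖ ^ 2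
      = 2 * π * ∫ t in Ioi (0 : ℝ), f t ^ 2 * Real.exp (-2 * ω * t) := by
  calc ∫ τ : ℝ, ‖laplace f (ω + τ * Complex.I)‖ ^ 2
      = 2 * π * ∫ ξ, ‖𝓕 (dampedExtension f ω) ξ‖ ^ 2 := by
        simp only [laplace_eq_fourier_dampedExtension]
        rw [Measure.integral_comp_inv_mul_left fun ξ => ‖𝓕 (dampedExtension f ω) ξ‖ ^ 2,
          abs_of_pos two_pi_pos, smul_eq_mul]
    _ = 2 * π * ∫ t in Ioi (0 : ℝ), f t ^ 2 * Real.exp (-2 * ω * t) := by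
        rw [integral_norm_sq_fourier_of_integrable (hf.integrable_dampedExtension hfc)
          (hf.memLp_two_dampedExtension hfc)]
        simp only [norm_dampedExtension_sq, integral_indicator measurableSet_Ioi]

lemma laplace_deriv (hf : ContDiff ℝ 1 f) (hf_exp : HasExpOrderLT f z.re)
    (hf'_exp : HasExpOrderLT (deriv f) z.re) :
    laplace (deriv f) z = z * laplace f z - f 0 := by
  have h_int := (hf_exp.integrableOn_mul_cexp hf.continuous).const_mul z
  have h_int' := hf'_exp.integrableOn_mul_cexp hf.continuous_deriv_one
  have h_deriv (t : ℝ) : HasDerivAt (fun t : ℝ => (f t : ℂ) * Complex.exp (-z * t))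
      (deriv f t * Complex.exp (-z * t) - z * (f t * Complex.exp (-z * t))) t := by
    have h_exp : HasDerivAt (fun t : ℝ => Complex.exp (-z * t))
        (Complex.exp (-z * t) * (-z * 1)) t :=
      (Complex.ofRealCLM.hasDerivAt.const_mul (-z)).cexp
    exact ((hf.differentiable one_ne_zero t).hasDerivAt.ofReal_comp.mul h_exp).congr_deriv (by ring)
  have h_ftc := integral_Ioi_of_hasDerivAt_of_tendsto' (a := 0) (fun t _ => h_deriv t)
    (h_int'.sub h_int) hf_exp.tendsto_mul_cexp
  rw [integral_sub h_int' h_int, integral_const_mul] at h_ftc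
  simp only [ofReal_zero, mul_zero, Complex.exp_zero, mul_one, zero_sub] at h_ftc
  simp only [laplace]
  linear_combination h_ftc

lemma laplace_conv (hf : Continuous f) (hh : Continuous h) (hf_exp : HasExpOrderLT f z.re)
    (hh_exp : HasExpOrderLT h z.re) : laplace (conv f h) z = laplace f z * laplace h z := by
  rw [laplace, laplace, laplace, ← ContinuousLinearMap.mul_apply' ℝ,
    ← integral_posConvolution (hf_exp.integrableOn_mul_cexp hf) (hh_exp.integrableOn_mul_cexp hh)]
  congr 1 with t
  rw [conv_comm, conv, ← intervalIntegral.integral_ofReal, ← intervalIntegral.integral_mul_const]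
  congr 1 with s
  have h_exp : Complex.exp (-z * t)
      = Complex.exp (-z * s) * Complex.exp (-z * (t - s : ℝ)) := by
    rw [← Complex.exp_add]
    push_cast
    ring_nf
  rw [ContinuousLinearMap.mul_apply', h_exp]
  push_cast
  ring

end Laplace

section ErrorBound

variable {d h : ℝ → ℝ} {α₁ α₂ ω : ℝ}

lemma iInf_specWeight_le (h : ℝ → ℝ) (hα₁ : 0 ≤ α₁) (hα₂ : 0 ≤ α₂) (ω τ : ℝ) :
    ⨅ τ, specWeight h α₁ α₂ ω τ ≤ specWeight h α₁ α₂ ω τ := by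
  refine ciInf_le ⟨0, ?_⟩ τ
  rintro _ ⟨τ, rfl⟩
  simp only [specWeight]
  positivity

lemma specWeight_mul_norm_laplace_sq (hd : Continuous d) (hh : ContDiff ℝ 1 h)
    (hd_exp : HasExpOrderLT d ω) (hh_exp : HasExpOrderLT h ω)
    (hh'_exp : HasExpOrderLT (deriv h) ω) (α₁ α₂ τ : ℝ) :
    specWeight h α₁ α₂ ω τ * ‖laplace d (ω + τ * Complex.I)‖ ^ 2
      = α₁ * ‖laplace (conv d h) (ω + τ * Complex.I)‖ ^ 2
        + α₂ * ‖laplace (deriv (conv d h)) (ω + τ * Complex.I)‖ ^ 2 := by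
  set z : ℂ := ω + τ * Complex.I with hz
  have hre : z.re = ω := by simp [hz]
  rw [← hre] at hd_exp hh_exp hh'_exp
  rw [laplace_deriv (contDiff_one_conv hd hh) (hd_exp.conv hh_exp)
      (hd_exp.deriv_conv hd hh hh'_exp), conv_zero_right,
    laplace_conv hd hh.continuous hd_exp hh_exp, specWeight, ← hz]
  simp only [ofReal_zero, sub_zero, norm_mul]
  ring

lemma iInf_specWeight_mul_integral_sq_le (hα₁ : 0 ≤ α₁) (hα₂ : 0 ≤ α₂) (hd : Continuous d)
    (hh : ContDiff ℝ 1 h) (hd_exp : HasExpOrderLT d ω) (hh_exp : HasExpOrderLT h ω)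
    (hh'_exp : HasExpOrderLT (deriv h) ω) :
    (⨅ τ, specWeight h α₁ α₂ ω τ) * ∫ t in Ioi (0 : ℝ), d t ^ 2 * Real.exp (-2 * ω * t)
      ≤ ∫ t in Ioi (0 : ℝ), (α₁ * conv d h t ^ 2 + α₂ * deriv (conv d h) t ^ 2) *
          Real.exp (-2 * ω * t) := by
  have hk := contDiff_one_conv hd hh
  have hk_exp := hd_exp.conv hh_exp
  have hk'_exp := hd_exp.deriv_conv hd hh hh'_exp
  have h_int := (integrable_norm_laplace_sq hk_exp hk.continuous).const_mul α₁
  have h_int' := (integrable_norm_laplace_sq hk'_exp hk.continuous_deriv_one).const_mul α₂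
  have h_spectral : (⨅ τ, specWeight h α₁ α₂ ω τ) *
        ∫ τ : ℝ, ‖laplace d (ω + τ * Complex.I)‖ ^ 2
      ≤ α₁ * (∫ τ : ℝ, ‖laplace (conv d h) (ω + τ * Complex.I)‖ ^ 2)
        + α₂ * ∫ τ : ℝ, ‖laplace (deriv (conv d h)) (ω + τ * Complex.I)‖ ^ 2 := by
    simp only [← integral_const_mul]
    rw [← integral_add h_int h_int']
    refine integral_mono ((integrable_norm_laplace_sq hd_exp hd).const_mul _) (h_int.add h_int')
      fun τ => ?_
    rw [← specWeight_mul_norm_laplace_sq hd hh hd_exp hh_exp hh'_exp]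
    exact mul_le_mul_of_nonneg_right (iInf_specWeight_le h hα₁ hα₂ ω τ) (sq_nonneg _)
  rw [integral_norm_laplace_sq hd_exp hd, integral_norm_laplace_sq hk_exp hk.continuous,
    integral_norm_laplace_sq hk'_exp hk.continuous_deriv_one] at h_spectral
  simp only [add_mul, mul_assoc α₁, mul_assoc α₂]
  rw [integral_add ((integrableOn_sq_mul_exp hk_exp hk.continuous).const_mul α₁)
      ((integrableOn_sq_mul_exp hk'_exp hk.continuous_deriv_one).const_mul α₂),
    integral_const_mul, integral_const_mul]
  refine le_of_mul_le_mul_left ?_ two_pi_pos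
  linarith

end ErrorBound

theorem error_bound_exact_h_general (γ γε h g gε : ℝ → ℝ) (α₁ α₂ ω : ℝ)
    (hα₁ : 0 ≤ α₁) (hα₂ : 0 ≤ α₂) (hγ : Continuous γ) (hγε : Continuous γε)
    (hh : ContDiff ℝ 1 h) (hd_exp : HasExpOrderLT (γ - γε) ω) (hh_exp : HasExpOrderLT h ω)
    (hh'_exp : HasExpOrderLT (deriv h) ω) (hm : 0 < ⨅ τ : ℝ, specWeight h α₁ α₂ ω τ)
    (hg : ∀ t, 0 ≤ t → g t = conv γ h t) (hgε : ∀ t, 0 ≤ t → gε t = conv γε h t) :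
    (∫ t in Ioi (0 : ℝ), (γ t - γε t) ^ 2 * Real.exp (-2 * ω * t))
      ≤ (1 / ⨅ τ : ℝ, specWeight h α₁ α₂ ω τ) *
        ∫ t in Ioi (0 : ℝ), (α₁ * (g t - gε t) ^ 2 + α₂ * (deriv g t - deriv gε t) ^ 2) *
          Real.exp (-2 * ω * t) := by
  have hg_pos : EqOn g (conv γ h) (Ioi 0) := fun t ht => hg t (le_of_lt ht)
  have hgε_pos : EqOn gε (conv γε h) (Ioi 0) := fun t ht => hgε t (le_of_lt ht)
  have h_conv (t : ℝ) : conv (γ - γε) h t = conv γ h t - conv γε h t :=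
    congrFun (conv_sub_left hγ hγε hh.continuous) t
  have h_deriv (t : ℝ) :
      deriv (conv (γ - γε) h) t = deriv (conv γ h) t - deriv (conv γε h) t := by
    rw [conv_sub_left hγ hγε hh.continuous]
    exact deriv_sub (hasDerivAt_conv hγ hh t).differentiableAt
      (hasDerivAt_conv hγε hh t).differentiableAt
  have h_rhs : ∫ t in Ioi (0 : ℝ), (α₁ * (g t - gε t) ^ 2 + α₂ * (deriv g t - deriv gε t) ^ 2) *
        Real.exp (-2 * ω * t)
      = ∫ t in Ioi (0 : ℝ), (α₁ * conv (γ - γε) h t ^ 2 + α₂ * deriv (conv (γ - γε) h) t ^ 2) *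
        Real.exp (-2 * ω * t) := by
    refine setIntegral_congr_fun measurableSet_Ioi fun t ht => ?_
    simp only [h_deriv t, h_conv t, hg_pos ht, hgε_pos ht,
      hg_pos.deriv isOpen_Ioi ht, hgε_pos.deriv isOpen_Ioi ht]
  rw [h_rhs, one_div, le_inv_mul_iff₀ hm]
  exact iInf_specWeight_mul_integral_sq_le hα₁ hα₂ (hγ.sub hγε) hh hd_exp hh_exp hh'_exp

/-- **Error bound with exact `h`.** If `g = γ*h` and `g_ε = γ_ε*h`, then
`‖γ − γ_ε‖²_{L²(ρ)} ≤ (1/m_ω^h) ‖g − g_ε‖²_{H¹_α(ρ)}`. -/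
theorem error_bound_exact_h (γ γε h g gε : ℝ → ℝ) (C σ α₁ α₂ ω : ℝ)
    (hC : 0 < C) (hσ : 0 < σ) (hα₁ : 0 < α₁) (hα₂ : 0 < α₂) (hα : α₁ + α₂ = 1)
    (hω : 0 < ω)
    (hsmoothγ : ContDiff ℝ (⊤ : ℕ∞) γ) (hsmoothγε : ContDiff ℝ (⊤ : ℕ∞) γε) (hsmoothh : ContDiff ℝ (⊤ : ℕ∞) h)
    (hdecayγ : ∀ t : ℝ, 0 ≤ t → |γ t| ≤ C * Real.exp (-σ * t))
    (hdecayγε : ∀ t : ℝ, 0 ≤ t → |γε t| ≤ C * Real.exp (-σ * t))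
    (hdecayh : ∀ t : ℝ, 0 ≤ t → |h t| ≤ C * Real.exp (-σ * t))
    (hdecayh' : ∀ t : ℝ, 0 ≤ t → |deriv h t| ≤ C * Real.exp (-σ * t))
    (hm : 0 < ⨅ τ : ℝ, specWeight h α₁ α₂ ω τ)
    (hg : ∀ t : ℝ, 0 ≤ t → g t = conv γ h t)
    (hgε : ∀ t : ℝ, 0 ≤ t → gε t = conv γε h t) :
    (∫ t in Set.Ioi (0 : ℝ), (γ t - γε t) ^ 2 * Real.exp (-2 * ω * t))
      ≤ (1 / ⨅ τ : ℝ, specWeight h α₁ α₂ ω τ) *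
        ∫ t in Set.Ioi (0 : ℝ),
          (α₁ * (g t - gε t) ^ 2 + α₂ * (deriv g t - deriv gε t) ^ 2) *
            Real.exp (-2 * ω * t) := by
  have h_exp {f : ℝ → ℝ} (hf : ∀ t, 0 ≤ t → |f t| ≤ C * Real.exp (-σ * t)) : HasExpOrderLT f ω :=
    ⟨-σ, by linarith, C, hf⟩
  exact error_bound_exact_h_general γ γε h g gε α₁ α₂ ω hα₁.le hα₂.le hsmoothγ.continuous
    hsmoothγε.continuous (hsmoothh.of_le (by exact_mod_cast le_top))
    ((h_exp hdecayγ).sub (h_exp hdecayγε)) (h_exp hdecayh) (h_exp hdecayh') hm hg hgε
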